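/- For every n ≥ 2 and every k with 1 ≤ k ≤ min(n, ⌈n/2⌉ + 1), Fishburn's alternating domain F_n on {1,…,n} is exactly (k, 2^{k-1})-abundant: its restriction to every k-element subset of {1,…,n} contains at least 2^{k-1} distinct linear orders, and some k-element subset has restriction containing exactly 2^{k-1} distinct orders. -/

import Mathlib

/-- `r` is a strict total order on `X`, supported on `X` (i.e. `r` never relates
elements outside `X`). -/
def IsLinearOrderOn {α : Type*} (X : Set α) (r : α → α → Prop) : Prop :=
  (∀ a b, r a b → a ∈ X ∧ b ∈ X) ∧
  (∀ a ∈ X, ¬ r a a) ∧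
  (∀ a ∈ X, ∀ b ∈ X, ∀ c ∈ X, r a b → r b c → r a c) ∧
  (∀ a ∈ X, ∀ b ∈ X, a ≠ b → r a b ∨ r b a)

/-- A domain on `X` is a set of linear orders on `X`. -/
def IsDomainOn {α : Type*} (X : Set α) (D : Set (α → α → Prop)) : Prop :=
  ∀ r ∈ D, IsLinearOrderOn X r

/-- The restriction of the order `r` to the subset `A`. -/
def restrictRel {α : Type*} (A : Set α) (r : α → α → Prop) : α → α → Prop :=
  fun a b => a ∈ A ∧ b ∈ A ∧ r a b

/-- The restriction of the domain `D` to the subset `A`: the set of linear orders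
on `A` induced by the orders in `D`. -/
def restrictDom {α : Type*} (A : Set α) (D : Set (α → α → Prop)) :
    Set (α → α → Prop) :=
  restrictRel A '' D

/-- `D` is `(k,s)`-abundant on `X`: its restriction to every `k`-element subset of `X`
contains at least `s` distinct linear orders. -/
def IsAbundant {α : Type*} (X : Set α) (D : Set (α → α → Prop)) (k s : ℕ) : Prop :=
  ∀ A : Set α, A ⊆ X → A.ncard = k → s ≤ (restrictDom A D).ncard

/-- `D` is exactly `(k,s)`-abundant: `(k,s)`-abundant but not `(k,s+1)`-abundant. -/
def IsExactlyAbundant {α : Type*} (X : Set α) (D : Set (α → α → Prop)) (k s : ℕ) : Prop :=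
  IsAbundant X D k s ∧ ¬ IsAbundant X D k (s + 1)

/-- Fishburn's alternating domain on `{1,…,n}`: all linear orders `r` on `{1,…,n}`
such that for every triple `a < b < c`, if `b` is odd then `r` does not rank `b`
first among `{a,b,c}`, and if `b` is even then `r` does not rank `b` last among
`{a,b,c}`. -/
def fishburnAlternating (n : ℕ) : Set (ℕ → ℕ → Prop) :=
  { r | IsLinearOrderOn (Set.Icc 1 n) r ∧
      ∀ a b c : ℕ, a ∈ Set.Icc 1 n → b ∈ Set.Icc 1 n → c ∈ Set.Icc 1 n →
        a < b → b < c →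
          (Odd b → ¬ (r b a ∧ r b c)) ∧ (Even b → ¬ (r a b ∧ r c b)) }

/-!
Every domain defined by never-last and never-first conditions on the middle elements of triples,
with a set `S` of alternatives telling which of the two applies, restricts to `A` as the same domain
built on `A`: an order on `A` extends by one alternative at a time, because the upper and the lower
bounds which the conditions impose on a new alternative never conflict. So the numbers of orders on
sets `A` with `k` elements have to be compared with `2 ^ (k - 1)`.

If the elements of `A` other than its two ends all lie in `S`, or all outside it, the domain on `A`
consists of the single-peaked or of the single-dipped orders, of which there are `2 ^ (k - 1)`. In
the alternating domain such an `A` consists of alternatives of one parity together with two ends.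

For a general `A` with least element `l` and greatest element `m` one may assume `l ∈ S` and
`m ∉ S`. Any single-peaked order on `A ∩ S` and any single-dipped order on `A \ S` are induced by
an order of the domain ranking `l` above `m`: start from the order `l, …, m` of the axis, move the
alternatives of `A ∩ S` that are to beat `l` above it and those of `A \ S` that are to lose to `m`
below it. This gives `2 ^ (k - 2)` orders, and reversal gives as many that rank `m` above `l`.
-/

open Set

/-! ### Linear orders and utility functions -/

section LinearOrders

variable {α : Type*} {A X : Set α} {r : α → α → Prop} {f g : α → ℚ}

theorem IsLinearOrderOn.restrictRel (hr : IsLinearOrderOn X r) (hAX : A ⊆ X) :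
    IsLinearOrderOn A (restrictRel A r) := by
  obtain ⟨-, irrefl, trans, total⟩ := hr
  refine ⟨fun a b h => ⟨h.1, h.2.1⟩, fun a ha h => irrefl a (hAX ha) h.2.2, ?_, ?_⟩
  · intro a ha b hb c hc hab hbc
    exact ⟨ha, hc, trans a (hAX ha) b (hAX hb) c (hAX hc) hab.2.2 hbc.2.2⟩
  · intro a ha b hb hne
    exact (total a (hAX ha) b (hAX hb) hne).imp (⟨ha, hb, ·⟩) (⟨hb, ha, ·⟩)

theorem IsLinearOrderOn.flip (hr : IsLinearOrderOn X r) : IsLinearOrderOn X (flip r) := by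
  obtain ⟨supp, irrefl, trans, total⟩ := hr
  exact ⟨fun a b h => (supp b a h).symm, irrefl,
    fun a ha b hb c hc hab hbc => trans c hc b hb a ha hbc hab,
    fun a ha b hb hne => (total a ha b hb hne).symm⟩

theorem IsLinearOrderOn.asymm (hr : IsLinearOrderOn X r) {a b : α} (hab : r a b) : ¬ r b a := by
  obtain ⟨supp, irrefl, trans, -⟩ := hr
  obtain ⟨ha, hb⟩ := supp a b hab
  exact fun hba => irrefl a ha (trans a ha b hb a ha hab hba)

theorem flip_injective : Function.Injective (flip : (α → α → Prop) → α → α → Prop) :=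
  Function.swap_bijective.injective

theorem finite_setOf_isLinearOrderOn (hX : X.Finite) : {r | IsLinearOrderOn X r}.Finite := by
  have graph_injective : Function.Injective fun (r : α → α → Prop) => {p : α × α | r p.1 p.2} :=
    fun r s h => by ext a b; exact Set.ext_iff.1 h (a, b)
  exact ((hX.prod hX).finite_subsets.preimage graph_injective.injOn).subset
    fun r hr p hp => hr.1 p.1 p.2 hp

/-- The ranking of `X` by decreasing value of the utility function `f`. Every linear order on a
finite set is of this form, and restricting or reversing an order, or inserting an alternative,
is more convenient for utilities than for relations. -/
def utilityOrder (X : Set α) (f : α → ℚ) : α → α → Prop :=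
  fun a b => a ∈ X ∧ b ∈ X ∧ f b < f a

theorem isLinearOrderOn_utilityOrder_iff :
    IsLinearOrderOn X (utilityOrder X f) ↔ InjOn f X := by
  constructor
  · rintro ⟨-, -, -, total⟩ a ha b hb hab
    by_contra hne
    rcases total a ha b hb hne with h | h
    · exact h.2.2.ne' hab
    · exact h.2.2.ne hab
  · intro hf
    refine ⟨fun a b h => ⟨h.1, h.2.1⟩, fun a _ h => lt_irrefl _ h.2.2,
      fun a ha b _ c hc hab hbc => ⟨ha, hc, hbc.2.2.trans hab.2.2⟩, fun a ha b hb hne => ?_⟩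
    exact (lt_or_gt_of_ne (hf.ne ha hb hne)).symm.imp (⟨ha, hb, ·⟩) (⟨hb, ha, ·⟩)

theorem IsLinearOrderOn.exists_utilityOrder_eq (hX : X.Finite) (hr : IsLinearOrderOn X r) :
    ∃ f : α → ℚ, utilityOrder X f = r := by
  obtain ⟨supp, irrefl, trans, total⟩ := id hr
  let f : α → ℚ := fun a => {b | r a b}.ncard
  have f_lt_of_rel {a b : α} (hab : r a b) : f b < f a := by
    obtain ⟨ha, hb⟩ := supp a b hab
    refine Nat.cast_lt.2 (ncard_lt_ncard ?_ (hX.subset fun c hc => (supp a c hc).2))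
    exact (ssubset_iff_of_subset fun c hbc => trans a ha b hb c (supp b c hbc).2 hab hbc).2
      ⟨b, hab, irrefl b hb⟩
  refine ⟨f, ?_⟩
  ext a b
  refine ⟨fun ⟨ha, hb, hlt⟩ => ?_, fun hab => ⟨(supp a b hab).1, (supp a b hab).2, f_lt_of_rel hab⟩⟩
  have hne : a ≠ b := by rintro rfl; exact lt_irrefl _ hlt
  exact (total a ha b hb hne).resolve_right fun hba => (f_lt_of_rel hba).not_gt hlt

theorem restrictRel_utilityOrder (hAX : A ⊆ X) :
    restrictRel A (utilityOrder X f) = utilityOrder A f := by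
  ext a b
  exact ⟨fun ⟨ha, hb, h⟩ => ⟨ha, hb, h.2.2⟩, fun ⟨ha, hb, h⟩ => ⟨ha, hb, hAX ha, hAX hb, h⟩⟩

theorem utilityOrder_congr (h : ∀ x ∈ X, ∀ y ∈ X, f x < f y ↔ g x < g y) :
    utilityOrder X f = utilityOrder X g := by
  ext a b
  exact and_congr_right fun ha => and_congr_right fun hb => h b hb a ha

theorem utilityOrder_neg : utilityOrder X (-f) = flip (utilityOrder X f) := by
  ext a b
  simp only [utilityOrder, flip, Pi.neg_apply, neg_lt_neg_iff]
  tauto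

theorem exists_cut (hX : X.Finite) {D : Set α}
    (hD : ∀ y ∈ X, ∀ z ∈ X, z ∈ D → f y ≤ f z → y ∈ D) :
    ∃ t, ∀ y ∈ X, (y ∈ D → f y < t) ∧ (y ∉ D → t < f y) := by
  obtain ⟨t, lower, upper⟩ := Order.exists_between_finsets
    ((hX.inter_of_left D).image f).toFinset ((hX.sdiff (t := D)).image f).toFinset <| by
      simp only [Finite.mem_toFinset, forall_mem_image]
      exact fun y hy z hz => not_le.1 fun hzy => hz.2 (hD z hz.1 y hy.1 hy.2 hzy)
  simp only [Finite.mem_toFinset, forall_mem_image] at lower upper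
  exact ⟨t, fun y hy => ⟨fun hyD => lower ⟨hy, hyD⟩, fun hyD => upper ⟨hy, hyD⟩⟩⟩

end LinearOrders

/-! ### Generalized Fishburn domains -/

section GeneralizedFishburn

variable {α : Type*} [LinearOrder α] {A S T X Y : Set α} {r : α → α → Prop} {f g p q : α → ℚ}
  {l m x : α}

theorem mem_uIoo_iff_lt_and_lt {a b c : α} : b ∈ uIoo a c ↔ a < b ∧ b < c ∨ c < b ∧ b < a := by
  simp only [uIoo_eq_union, mem_union, mem_Ioo]

/-- The generalized Fishburn domain on `X`: an alternative in `S` is never ranked last, and one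
outside `S` never first, in a triple of which it is the middle element. Fishburn's alternating
domain takes the even numbers for `S`; `S = univ` gives the single-peaked orders and `S = ∅` the
single-dipped ones. -/
def genFishburn (S X : Set α) : Set (α → α → Prop) :=
  {r | IsLinearOrderOn X r ∧ ∀ a ∈ X, ∀ b ∈ X, ∀ c ∈ X, b ∈ uIoo a c →
    (b ∈ S → ¬ (r a b ∧ r c b)) ∧ (b ∉ S → ¬ (r b a ∧ r b c))}

/-- The utility functions whose ranking of `X` lies in `genFishburn S X`; see
`utilityOrder_mem_genFishburn_iff`. -/
structure IsFishburnUtility (S X : Set α) (f : α → ℚ) : Prop where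
  injOn : InjOn f X
  never_last : ∀ ⦃a⦄, a ∈ X → ∀ ⦃b⦄, b ∈ X → ∀ ⦃c⦄, c ∈ X → b ∈ uIoo a c → b ∈ S →
    f a < f b ∨ f c < f b
  never_first : ∀ ⦃a⦄, a ∈ X → ∀ ⦃b⦄, b ∈ X → ∀ ⦃c⦄, c ∈ X → b ∈ uIoo a c → b ∉ S →
    f b < f a ∨ f b < f c

theorem utilityOrder_mem_genFishburn_iff :
    utilityOrder X f ∈ genFishburn S X ↔ IsFishburnUtility S X f := by
  constructor
  · rintro ⟨hlin, hr⟩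
    have hf := isLinearOrderOn_utilityOrder_iff.1 hlin
    have lt_of_not_rel {a b : α} (ha : a ∈ X) (hb : b ∈ X) (hne : a ≠ b)
        (hab : ¬ utilityOrder X f a b) : f a < f b :=
      (not_lt.1 fun hlt => hab ⟨ha, hb, hlt⟩).lt_of_ne (hf.ne ha hb hne)
    have ne_of_mem {a b c : α} (hb : b ∈ uIoo a c) : a ≠ b ∧ c ≠ b := by
      rw [mem_uIoo_iff_lt_and_lt] at hb
      grind
    refine ⟨hf, fun a ha b hb c hc hbac hbS => ?_, fun a ha b hb c hc hbac hbS => ?_⟩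
    · exact (not_and_or.1 ((hr a ha b hb c hc hbac).1 hbS)).imp
        (lt_of_not_rel ha hb (ne_of_mem hbac).1) (lt_of_not_rel hc hb (ne_of_mem hbac).2)
    · exact (not_and_or.1 ((hr a ha b hb c hc hbac).2 hbS)).imp
        (lt_of_not_rel hb ha (ne_of_mem hbac).1.symm) (lt_of_not_rel hb hc (ne_of_mem hbac).2.symm)
  · rintro ⟨hf, hlast, hfirst⟩
    refine ⟨isLinearOrderOn_utilityOrder_iff.2 hf, fun a ha b hb c hc hbac => ⟨?_, ?_⟩⟩
    · rintro hbS ⟨hab, hcb⟩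
      exact (hlast ha hb hc hbac hbS).elim hab.2.2.not_gt hcb.2.2.not_gt
    · rintro hbS ⟨hba, hbc⟩
      exact (hfirst ha hb hc hbac hbS).elim hba.2.2.not_gt hbc.2.2.not_gt

theorem exists_isFishburnUtility_of_mem_genFishburn (hX : X.Finite) (hr : r ∈ genFishburn S X) :
    ∃ f, IsFishburnUtility S X f ∧ utilityOrder X f = r := by
  obtain ⟨f, rfl⟩ := hr.1.exists_utilityOrder_eq hX
  exact ⟨f, utilityOrder_mem_genFishburn_iff.1 hr, rfl⟩

theorem finite_genFishburn (hX : X.Finite) : (genFishburn S X).Finite :=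
  (finite_setOf_isLinearOrderOn hX).subset fun _ hr => hr.1

theorem restrictRel_mem_genFishburn (hAX : A ⊆ X) (hr : r ∈ genFishburn S X) :
    restrictRel A r ∈ genFishburn S A := by
  refine ⟨hr.1.restrictRel hAX, fun a ha b hb c hc hbac => ?_⟩
  obtain ⟨hlast, hfirst⟩ := hr.2 a (hAX ha) b (hAX hb) c (hAX hc) hbac
  exact ⟨fun hbS h => hlast hbS ⟨h.1.2.2, h.2.2.2⟩, fun hbS h => hfirst hbS ⟨h.1.2.2, h.2.2.2⟩⟩

theorem genFishburn_congr
    (h : ∀ a ∈ X, ∀ b ∈ X, ∀ c ∈ X, b ∈ uIoo a c → (b ∈ S ↔ b ∈ T)) :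
    genFishburn S X = genFishburn T X := by
  ext r
  refine and_congr_right fun _ => forall₂_congr fun a ha => forall₂_congr fun b hb =>
    forall₃_congr fun c hc hbac => ?_
  rw [h a ha b hb c hc hbac]

theorem flip_mem_genFishburn_compl (hr : r ∈ genFishburn S X) : flip r ∈ genFishburn Sᶜ X :=
  ⟨hr.1.flip, fun a ha b hb c hc hbac =>
    ⟨(hr.2 a ha b hb c hc hbac).2, fun hb' => (hr.2 a ha b hb c hc hbac).1 (not_not.1 hb')⟩⟩

theorem image_flip_genFishburn : flip '' genFishburn S X = genFishburn Sᶜ X := by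
  refine Subset.antisymm (image_subset_iff.2 fun r => flip_mem_genFishburn_compl) fun r hr => ?_
  exact ⟨flip r, compl_compl S ▸ flip_mem_genFishburn_compl hr, rfl⟩

theorem ncard_genFishburn_compl : (genFishburn Sᶜ X).ncard = (genFishburn S X).ncard := by
  rw [← image_flip_genFishburn, ncard_image_of_injective _ flip_injective]

theorem IsFishburnUtility.neg (hf : IsFishburnUtility S X f) : IsFishburnUtility Sᶜ X (-f) := by
  rw [← utilityOrder_mem_genFishburn_iff, utilityOrder_neg]
  exact flip_mem_genFishburn_compl (utilityOrder_mem_genFishburn_iff.2 hf)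

/-! ### Extension to more alternatives -/

theorem IsFishburnUtility.update_of_bounds (hf : IsFishburnUtility S X f) (hxX : x ∉ X) {t : ℚ}
    (ht : ∀ y ∈ X, f y ≠ t)
    (hmid : ∀ a ∈ X, ∀ c ∈ X, x ∈ uIoo a c →
      (x ∈ S → f a < t ∨ f c < t) ∧ (x ∉ S → t < f a ∨ t < f c))
    (hend : ∀ b ∈ X, ∀ c ∈ X, b ∈ uIoo x c →
      (b ∈ S → t < f b ∨ f c < f b) ∧ (b ∉ S → f b < t ∨ f b < f c)) :
    IsFishburnUtility S (insert x X) (Function.update f x t) := by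
  have upd {y : α} (hy : y ∈ X) : Function.update f x t y = f y :=
    Function.update_of_ne (ne_of_mem_of_not_mem hy hxX) _ _
  have triple : ∀ a ∈ insert x X, ∀ b ∈ insert x X, ∀ c ∈ insert x X, b ∈ uIoo a c →
      (b ∈ S → Function.update f x t a < Function.update f x t b ∨
        Function.update f x t c < Function.update f x t b) ∧
      (b ∉ S → Function.update f x t b < Function.update f x t a ∨
        Function.update f x t b < Function.update f x t c) := by
    rintro a (rfl | ha) b (rfl | hb) c (rfl | hc) hbac
    · simp at hbac
    · simp at hbac
    · simp at hbac
    · simpa [upd hb, upd hc] using hend b hb c hc hbac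
    · simp at hbac
    · simpa [upd ha, upd hc] using hmid a ha c hc hbac
    · rw [uIoo_comm] at hbac
      simpa [upd hb, upd ha, or_comm] using hend b hb a ha hbac
    · simp only [upd ha, upd hb, upd hc]
      exact ⟨hf.never_last ha hb hc hbac, hf.never_first ha hb hc hbac⟩
  refine ⟨(injOn_insert hxX).2 ⟨?_, ?_⟩,
    fun a ha b hb c hc hbac => (triple a ha b hb c hc hbac).1,
    fun a ha b hb c hc hbac => (triple a ha b hb c hc hbac).2⟩
  · exact hf.injOn.congr fun y hy => (upd hy).symm
  · rintro ⟨y, hy, hyt⟩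
    exact ht y hy (by simpa [upd hy] using hyt)

/-- The alternatives outside `S` that an inserted `x` has to be ranked above: they would be first in
a triple with endpoint `x` otherwise. -/
def forcedBelow (S X : Set α) (f : α → ℚ) (x : α) : Set α :=
  {b ∈ X | b ∉ S ∧ ∃ a ∈ X, b ∈ uIoo x a ∧ f a < f b}

/-- The alternatives in `S` that an inserted `x` has to be ranked below: they would be last in a
triple with endpoint `x` otherwise. -/
def forcedAbove (S X : Set α) (f : α → ℚ) (x : α) : Set α :=
  {b ∈ X | b ∈ S ∧ ∃ a ∈ X, b ∈ uIoo x a ∧ f b < f a}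

theorem IsFishburnUtility.lt_of_mem_forcedBelow_of_mem_forcedAbove (hf : IsFishburnUtility S X f)
    {b h : α} (hb : b ∈ forcedBelow S X f x) (hh : h ∈ forcedAbove S X f x) : f b < f h := by
  obtain ⟨hbX, hbS, a, haX, hba, hfa⟩ := hb
  obtain ⟨hhX, hhS, c, hcX, hhc, hfc⟩ := hh
  have hbh : b ≠ h := by rintro rfl; exact hbS hhS
  have middle_of_farther : b ∈ uIoo a h ∨ h ∈ uIoo c b := by
    simp only [mem_uIoo_iff_lt_and_lt] at hba hhc ⊢
    grind
  rcases middle_of_farther with hmid | hmid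
  · exact (hf.never_first haX hbX hhX hmid hbS).resolve_left hfa.not_gt
  · exact (hf.never_last hcX hhX hbX hmid hhS).resolve_left hfc.not_gt

theorem IsFishburnUtility.min_lt_of_mem_forcedAbove (hf : IsFishburnUtility S X f) {a c h : α}
    (ha : a ∈ X) (hc : c ∈ X) (hx : x ∈ uIoo a c) (hh : h ∈ forcedAbove S X f x) :
    min (f a) (f c) < f h := by
  obtain ⟨hhX, hhS, d, hdX, hhd, hfd⟩ := hh
  have middle_with_opposite : h ∈ uIoo d a ∨ h ∈ uIoo d c := by
    simp only [mem_uIoo_iff_lt_and_lt] at hx hhd ⊢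
    grind
  rcases middle_with_opposite with hmid | hmid
  · exact min_lt_of_left_lt ((hf.never_last hdX hhX ha hmid hhS).resolve_left hfd.not_gt)
  · exact min_lt_of_right_lt ((hf.never_last hdX hhX hc hmid hhS).resolve_left hfd.not_gt)

theorem IsFishburnUtility.exists_update_of_mem (hf : IsFishburnUtility S X f) (hX : X.Finite)
    (hxX : x ∉ X) (hxS : x ∈ S) :
    ∃ t, IsFishburnUtility S (insert x X) (Function.update f x t) := by
  -- `x` is ranked as low as its obligations allow: immediately above `D`.
  let D : Set α := {y | (∃ b ∈ forcedBelow S X f x, f y ≤ f b) ∨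
    ∃ a ∈ X, ∃ c ∈ X, x ∈ uIoo a c ∧ f y ≤ min (f a) (f c)}
  have ne_right {b c : α} (hbc : b ∈ uIoo x c) : b ≠ c := by rintro rfl; simp at hbc
  obtain ⟨t, ht⟩ : ∃ t, ∀ y ∈ X, (y ∈ D → f y < t) ∧ (y ∉ D → t < f y) := by
    refine exists_cut hX ?_
    rintro y - z - (⟨b, hb, hzb⟩ | ⟨a, ha, c, hc, hx, hz⟩) hyz
    · exact Or.inl ⟨b, hb, hyz.trans hzb⟩
    · exact Or.inr ⟨a, ha, c, hc, hx, hyz.trans hz⟩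
  refine ⟨t, hf.update_of_bounds hxX (fun y hy => ?_) (fun a ha c hc hx => ⟨fun _ => ?_, ?_⟩)
    (fun b hb c hc hbc => ⟨fun hbS => ?_, fun hbS => ?_⟩)⟩
  · by_cases hyD : y ∈ D
    · exact ((ht y hy).1 hyD).ne
    · exact ((ht y hy).2 hyD).ne'
  · rcases le_total (f a) (f c) with hac | hca
    · exact Or.inl ((ht a ha).1 (Or.inr ⟨a, ha, c, hc, hx, le_min le_rfl hac⟩))
    · exact Or.inr ((ht c hc).1 (Or.inr ⟨a, ha, c, hc, hx, le_min hca le_rfl⟩))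
  · exact fun hxS' => absurd hxS hxS'
  · refine or_iff_not_imp_right.2 fun hcb => (ht b hb).2 ?_
    have hforced : b ∈ forcedAbove S X f x :=
      ⟨hb, hbS, c, hc, hbc, (not_lt.1 hcb).lt_of_ne (hf.injOn.ne hb hc (ne_right hbc))⟩
    rintro (⟨b', hb', hle⟩ | ⟨a, ha, c', hc', hx, hle⟩)
    · exact (hf.lt_of_mem_forcedBelow_of_mem_forcedAbove hb' hforced).not_ge hle
    · exact (hf.min_lt_of_mem_forcedAbove ha hc' hx hforced).not_ge hle
  · refine or_iff_not_imp_right.2 fun hcb => (ht b hb).1 (Or.inl ⟨b, ?_, le_rfl⟩)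
    exact ⟨hb, hbS, c, hc, hbc, (not_lt.1 hcb).lt_of_ne (hf.injOn.ne hc hb (ne_right hbc).symm)⟩

theorem IsFishburnUtility.exists_update (hf : IsFishburnUtility S X f) (hX : X.Finite)
    (hxX : x ∉ X) : ∃ t, IsFishburnUtility S (insert x X) (Function.update f x t) := by
  by_cases hxS : x ∈ S
  · exact hf.exists_update_of_mem hX hxX hxS
  · obtain ⟨t, ht⟩ := hf.neg.exists_update_of_mem hX hxX hxS
    refine ⟨-t, ?_⟩
    have hneg : -Function.update (-f) x t = Function.update f x (-t) := by
      ext y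
      by_cases hy : y = x <;> simp [hy]
    simpa only [compl_compl, hneg] using ht.neg

theorem IsFishburnUtility.exists_extension (hf : IsFishburnUtility S A f) (hA : A.Finite)
    (hY : Y.Finite) : ∃ g, IsFishburnUtility S (A ∪ Y) g ∧ EqOn g f A := by
  induction Y, hY using Set.Finite.induction_on with
  | empty => exact ⟨f, by rwa [union_empty], eqOn_refl f A⟩
  | @insert x Y _ hY ih =>
    obtain ⟨g, hg, hgf⟩ := ih
    rw [union_insert]
    by_cases hx : x ∈ A ∪ Y
    · exact ⟨g, by rwa [insert_eq_of_mem hx], hgf⟩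
    · obtain ⟨t, ht⟩ := hg.exists_update (hA.union hY) hx
      refine ⟨Function.update g x t, ht, fun a ha => ?_⟩
      rw [Function.update_of_ne (ne_of_mem_of_not_mem (Or.inl ha) hx), hgf ha]

theorem restrictDom_genFishburn (hX : X.Finite) (hAX : A ⊆ X) :
    restrictDom A (genFishburn S X) = genFishburn S A := by
  refine Subset.antisymm (image_subset_iff.2 fun r => restrictRel_mem_genFishburn hAX) ?_
  intro r hr
  obtain ⟨f, hf, rfl⟩ := exists_isFishburnUtility_of_mem_genFishburn (hX.subset hAX) hr
  obtain ⟨g, hg, hgf⟩ := hf.exists_extension (hX.subset hAX) hX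
  rw [union_eq_right.2 hAX] at hg
  refine ⟨utilityOrder X g, utilityOrder_mem_genFishburn_iff.2 hg, ?_⟩
  rw [restrictRel_utilityOrder hAX]
  exact utilityOrder_congr fun x hx y hy => by rw [hgf hx, hgf hy]

/-! ### Single-peaked and single-dipped orders -/

theorem exists_isLeast_isGreatest_lt (hX : 1 < X.ncard) :
    ∃ l m, IsLeast X l ∧ IsGreatest X m ∧ l < m := by
  have hfin : X.Finite := finite_of_ncard_pos (by omega)
  obtain ⟨a, ha, b, hb, hab⟩ := (one_lt_ncard hfin).1 hX
  obtain ⟨l, hl, hmin⟩ := exists_min_image X id hfin ⟨a, ha⟩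
  obtain ⟨m, hm, hmax⟩ := exists_max_image X id hfin ⟨a, ha⟩
  refine ⟨l, m, ⟨hl, hmin⟩, ⟨hm, hmax⟩, (hmin m hm).lt_of_ne ?_⟩
  rintro rfl
  exact hab ((hmax a ha).antisymm (hmin a ha) |>.trans ((hmax b hb).antisymm (hmin b hb)).symm)

theorem notMem_uIoo_of_isLeast (hl : IsLeast X l) : ∀ a ∈ X, ∀ c ∈ X, l ∉ uIoo a c :=
  fun _ ha _ hc h => (le_min (hl.2 ha) (hl.2 hc)).not_gt h.1

theorem notMem_uIoo_of_isGreatest (hm : IsGreatest X m) : ∀ a ∈ X, ∀ c ∈ X, m ∉ uIoo a c :=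
  fun _ ha _ hc h => (max_le (hm.2 ha) (hm.2 hc)).not_gt h.2

/-- The single-peaked orders on `X` that rank `x` last. -/
def singlePeakedLast (X : Set α) (x : α) : Set (α → α → Prop) :=
  {r ∈ genFishburn univ X | ∀ y ∈ X, y ≠ x → r y x}

theorem injOn_restrictRel_singlePeakedLast :
    InjOn (restrictRel (X \ {x})) (singlePeakedLast X x) := by
  rintro r ⟨⟨hr, -⟩, hrx⟩ s ⟨⟨hs, -⟩, hsx⟩ hrs
  have rel_of_rel {r s : α → α → Prop} (hr : IsLinearOrderOn X r)
      (hrx : ∀ y ∈ X, y ≠ x → r y x) (hsx : ∀ y ∈ X, y ≠ x → s y x)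
      (hrs : restrictRel (X \ {x}) r = restrictRel (X \ {x}) s) (a b : α) (hab : r a b) :
      s a b := by
    obtain ⟨ha, hb⟩ := hr.1 a b hab
    have hne : a ≠ b := by rintro rfl; exact hr.2.1 a ha hab
    by_cases hax : a = x
    · subst hax
      exact absurd hab (hr.asymm (hrx b hb hne.symm))
    by_cases hbx : b = x
    · exact hbx ▸ hsx a ha hax
    have hres : restrictRel (X \ {x}) r a b := ⟨⟨ha, hax⟩, ⟨hb, hbx⟩, hab⟩
    exact (hrs ▸ hres).2.2
  ext a b
  exact ⟨rel_of_rel hr hrx hsx hrs a b, rel_of_rel hs hsx hrx hrs.symm a b⟩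

theorem image_restrictRel_singlePeakedLast (hX : X.Finite) (hxX : x ∈ X)
    (hx : ∀ a ∈ X, ∀ c ∈ X, x ∉ uIoo a c) :
    restrictRel (X \ {x}) '' singlePeakedLast X x = genFishburn univ (X \ {x}) := by
  refine Subset.antisymm
    (image_subset_iff.2 fun r hr => restrictRel_mem_genFishburn sdiff_subset hr.1) fun r hr => ?_
  obtain ⟨f, hf, rfl⟩ := exists_isFishburnUtility_of_mem_genFishburn hX.sdiff hr
  obtain ⟨t, ht⟩ := exists_cut (f := f) hX.sdiff (D := ∅) (by simp)
  have ht {y : α} (hy : y ∈ X) (hyx : y ≠ x) : t < f y := (ht y ⟨hy, hyx⟩).2 (notMem_empty y)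
  have hg : IsFishburnUtility univ X (Function.update f x t) := by
    rw [← insert_sdiff_self_of_mem hxX]
    refine hf.update_of_bounds (by simp) (fun y hy => (ht hy.1 hy.2).ne') ?_ ?_
    · exact fun a ha c hc hxac => absurd hxac (hx a ha.1 c hc.1)
    · exact fun b hb _ _ _ => ⟨fun _ => Or.inl (ht hb.1 hb.2), fun hb' => absurd (mem_univ b) hb'⟩
  refine ⟨utilityOrder X (Function.update f x t), ⟨utilityOrder_mem_genFishburn_iff.2 hg, ?_⟩, ?_⟩
  · exact fun y hy hyx => ⟨hy, hxX, by simpa [hyx] using ht hy hyx⟩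
  · rw [restrictRel_utilityOrder sdiff_subset]
    refine utilityOrder_congr fun y hy z hz => ?_
    rw [Function.update_of_ne hy.2, Function.update_of_ne hz.2]

theorem ncard_singlePeakedLast (hX : X.Finite) (hxX : x ∈ X)
    (hx : ∀ a ∈ X, ∀ c ∈ X, x ∉ uIoo a c) :
    (singlePeakedLast X x).ncard = (genFishburn univ (X \ {x})).ncard := by
  rw [← image_restrictRel_singlePeakedLast hX hxX hx,
    injOn_restrictRel_singlePeakedLast.ncard_image]

theorem genFishburn_univ_eq_union (hX : X.Finite) (hl : IsLeast X l) (hm : IsGreatest X m)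
    (hlm : l ≠ m) :
    genFishburn univ X = singlePeakedLast X l ∪ singlePeakedLast X m := by
  refine Subset.antisymm (fun r hr => ?_) (union_subset (sep_subset _ _) (sep_subset _ _))
  obtain ⟨f, hf, rfl⟩ := exists_isFishburnUtility_of_mem_genFishburn hX hr
  have end_last {y : α} (hy : y ∈ X) (hyl : y ≠ l) (hym : y ≠ m) : f l < f y ∨ f m < f y :=
    hf.never_last hl.1 hy hm.1
      (mem_uIoo_of_lt ((hl.2 hy).lt_of_ne' hyl) ((hm.2 hy).lt_of_ne hym)) (mem_univ y)
  rcases lt_or_gt_of_ne (hf.injOn.ne hl.1 hm.1 hlm) with hlt | hlt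
  · refine Or.inl ⟨hr, fun y hy hyl => ⟨hy, hl.1, ?_⟩⟩
    by_cases hym : y = m
    · rwa [hym]
    · exact (end_last hy hyl hym).elim id hlt.trans
  · refine Or.inr ⟨hr, fun y hy hym => ⟨hy, hm.1, ?_⟩⟩
    by_cases hyl : y = l
    · rwa [hyl]
    · exact (end_last hy hyl hym).elim hlt.trans id

theorem ncard_genFishburn_of_ncard_eq_one (hX : X.ncard = 1) : (genFishburn S X).ncard = 1 := by
  obtain ⟨x, rfl⟩ := ncard_eq_one.1 hX
  refine ncard_eq_one.2 ⟨fun _ _ => False, Subset.antisymm (fun r hr => ?_) ?_⟩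
  · obtain ⟨⟨supp, irrefl, -⟩, -⟩ := hr
    ext a b
    refine iff_false_intro fun hab => ?_
    obtain ⟨rfl, rfl⟩ := supp a b hab
    exact irrefl _ rfl hab
  · simp [genFishburn, IsLinearOrderOn]

theorem ncard_genFishburn_univ {s : ℕ} (hX : X.ncard = s + 1) :
    (genFishburn univ X).ncard = 2 ^ s := by
  induction s generalizing X with
  | zero => exact ncard_genFishburn_of_ncard_eq_one hX
  | succ s ih =>
    have hfin : X.Finite := finite_of_ncard_ne_zero (by omega)
    obtain ⟨l, m, hl, hm, hlm⟩ := exists_isLeast_isGreatest_lt (X := X) (by omega)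
    have ncard_last {x : α} (hxX : x ∈ X) (hx : ∀ a ∈ X, ∀ c ∈ X, x ∉ uIoo a c) :
        (singlePeakedLast X x).ncard = 2 ^ s := by
      rw [ncard_singlePeakedLast hfin hxX hx, ih]
      rw [ncard_sdiff_singleton_of_mem hxX, hX, Nat.add_sub_cancel]
    have finite_last (x : α) : (singlePeakedLast X x).Finite :=
      (finite_genFishburn hfin).subset (sep_subset _ _)
    have hdisj : Disjoint (singlePeakedLast X l) (singlePeakedLast X m) :=
      disjoint_left.2 fun r hrl hrm =>
        hrl.1.1.asymm (hrl.2 m hm.1 hlm.ne') (hrm.2 l hl.1 hlm.ne)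
    calc (genFishburn univ X).ncard
        = (singlePeakedLast X l).ncard + (singlePeakedLast X m).ncard := by
          rw [genFishburn_univ_eq_union hfin hl hm hlm.ne,
            ncard_union_eq hdisj (finite_last l) (finite_last m)]
      _ = 2 ^ s + 2 ^ s := by
          rw [ncard_last hl.1 (notMem_uIoo_of_isLeast hl),
            ncard_last hm.1 (notMem_uIoo_of_isGreatest hm)]
      _ = 2 ^ (s + 1) := by rw [pow_succ, mul_two]

theorem ncard_genFishburn_empty {s : ℕ} (hX : X.ncard = s + 1) :
    (genFishburn ∅ X).ncard = 2 ^ s := by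
  rw [← compl_univ, ncard_genFishburn_compl, ncard_genFishburn_univ hX]

/-! ### Merging a single-peaked and a single-dipped order -/

/-- `g` places the alternatives of `X` on a line, in their given order or in the reverse one.
Allowing both makes statements about the two ends of `X` interchangeable. -/
def IsAxis (X : Set α) (g : α → ℚ) : Prop :=
  StrictMonoOn g X ∨ StrictAntiOn g X

theorem IsAxis.neg (hg : IsAxis X g) : IsAxis X (-g) :=
  hg.symm.imp StrictAntiOn.neg StrictMonoOn.neg

theorem IsAxis.mono (hg : IsAxis X g) (hAX : A ⊆ X) : IsAxis A g :=
  hg.imp (·.mono hAX) (·.mono hAX)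

theorem IsAxis.injOn (hg : IsAxis X g) : InjOn g X :=
  hg.elim StrictMonoOn.injOn StrictAntiOn.injOn

theorem IsAxis.mem_uIoo_iff (hg : IsAxis X g) {a b c : α} (ha : a ∈ X) (hb : b ∈ X) (hc : c ∈ X) :
    b ∈ uIoo a c ↔ g a < g b ∧ g b < g c ∨ g c < g b ∧ g b < g a := by
  rw [mem_uIoo_iff_lt_and_lt]
  rcases hg with hg | hg
  · rw [hg.lt_iff_lt ha hb, hg.lt_iff_lt hb hc, hg.lt_iff_lt hc hb, hg.lt_iff_lt hb ha]
  · rw [hg.lt_iff_gt ha hb, hg.lt_iff_gt hb hc, hg.lt_iff_gt hc hb, hg.lt_iff_gt hb ha]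
    tauto

theorem exists_strictAntiOn (hX : X.Finite) : ∃ g : α → ℚ, StrictAntiOn g X := by
  have hlin : IsLinearOrderOn X fun a b => a ∈ X ∧ b ∈ X ∧ a < b :=
    ⟨fun a b h => ⟨h.1, h.2.1⟩, fun a _ h => lt_irrefl a h.2.2,
      fun a ha b _ c hc hab hbc => ⟨ha, hc, hab.2.2.trans hbc.2.2⟩,
      fun a ha b hb hne => (lt_or_gt_of_ne hne).imp (⟨ha, hb, ·⟩) (⟨hb, ha, ·⟩)⟩
  obtain ⟨g, hg⟩ := hlin.exists_utilityOrder_eq hX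
  refine ⟨g, fun a ha b hb hab => ?_⟩
  have : utilityOrder X g a b := by rw [hg]; exact ⟨ha, hb, hab⟩
  exact this.2.2

theorem IsFishburnUtility.exists_anchored_above (hp : IsFishburnUtility univ Y p) (hg : IsAxis Y g)
    (hl : l ∈ Y) (hmax : ∀ x ∈ Y, g x ≤ g l) :
    ∃ f, utilityOrder Y f = utilityOrder Y p ∧ f l = g l ∧ ∀ x ∈ Y, f x = g x ∨ g l ≤ f x := by
  -- By single-peakedness the alternatives below the end `l` are ranked by their distance to `l`.
  have lt_iff_of_below {x y : α} (hx : x ∈ Y) (hy : y ∈ Y) (hxl : p x < p l) (hyl : p y < p l) :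
      g x < g y ↔ p x < p y := by
    have lt_of_lt {x y : α} (hx : x ∈ Y) (hy : y ∈ Y) (hyl : p y < p l) (hxy : g x < g y) :
        p x < p y := by
      have hne : g y ≠ g l := hg.injOn.ne hy hl (by rintro rfl; exact lt_irrefl _ hyl)
      have hmid : y ∈ uIoo x l :=
        (hg.mem_uIoo_iff hx hy hl).2 (Or.inl ⟨hxy, (hmax y hy).lt_of_ne hne⟩)
      exact (hp.never_last hx hy hl hmid (mem_univ y)).resolve_right hyl.not_gt
    refine ⟨lt_of_lt hx hy hyl, fun hxy => not_le.1 fun hle => ?_⟩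
    rcases hle.lt_or_eq with hlt | heq
    · exact (lt_of_lt hy hx hxl hlt).not_gt hxy
    · rw [hg.injOn hy hx heq] at hxy
      exact lt_irrefl _ hxy
  have lt_of_below {x : α} (hx : x ∈ Y) (hxl : p x < p l) : g x < g l :=
    (hmax x hx).lt_of_ne (hg.injOn.ne hx hl (by rintro rfl; exact lt_irrefl _ hxl))
  refine ⟨fun x => if p x < p l then g x else g l + (p x - p l),
    utilityOrder_congr fun x hx y hy => ?_, by simp, fun x _ => ?_⟩
  · split_ifs with hxl hyl hyl
    · exact lt_iff_of_below hx hy hxl hyl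
    · grind
    · grind
    · simp
  · by_cases hxl : p x < p l
    · simp [hxl]
    · simp [hxl, not_lt.1 hxl]

theorem IsFishburnUtility.exists_anchored_below (hq : IsFishburnUtility ∅ Y q) (hg : IsAxis Y g)
    (hm : m ∈ Y) (hmin : ∀ x ∈ Y, g m ≤ g x) :
    ∃ f, utilityOrder Y f = utilityOrder Y q ∧ f m = g m ∧ ∀ x ∈ Y, f x = g x ∨ f x ≤ g m := by
  obtain ⟨f, hfq, hfm, hfg⟩ := (compl_empty ▸ hq.neg).exists_anchored_above hg.neg hm
    fun x hx => neg_le_neg (hmin x hx)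
  refine ⟨-f, ?_, neg_eq_iff_eq_neg.2 hfm, fun x hx => ?_⟩
  · rw [utilityOrder_neg, hfq, utilityOrder_neg]
    rfl
  · exact (hfg x hx).imp neg_eq_iff_eq_neg.2 neg_le.1

theorem IsFishburnUtility.never_last_of_le_axis (hf : IsFishburnUtility univ (X ∩ S) f)
    (hg : IsAxis X g) (hl : l ∈ X ∩ S) (hmax : ∀ x ∈ X, g x ≤ g l) (hfl : f l = g l)
    (hle : ∀ x ∈ X ∩ S, g x ≤ f x) (hge : ∀ x ∈ X \ S, f x ≤ g x)
    {a b c : α} (ha : a ∈ X) (hb : b ∈ X) (hc : c ∈ X) (hbac : b ∈ uIoo a c) (hbS : b ∈ S) :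
    f a < f b ∨ f c < f b := by
  wlog hcb : g c < g b generalizing a c
  · rw [uIoo_comm] at hbac
    refine (this hc ha hbac ?_).symm
    have := (hg.mem_uIoo_iff hc hb ha).1 hbac
    tauto
  by_cases hcS : c ∈ S
  · by_cases haS : a ∈ S
    · exact hf.never_last ⟨ha, haS⟩ ⟨hb, hbS⟩ ⟨hc, hcS⟩ hbac (mem_univ b)
    have hba : g b < g a := by
      have := (hg.mem_uIoo_iff ha hb hc).1 hbac
      grind
    have hblc : b ∈ uIoo l c :=
      (hg.mem_uIoo_iff hl.1 hb hc).2 (Or.inr ⟨hcb, hba.trans_le (hmax a ha)⟩)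
    refine (hf.never_last hl ⟨hb, hbS⟩ ⟨hc, hcS⟩ hblc (mem_univ b)).imp_left fun hlb => ?_
    calc f a ≤ g a := hge a ⟨ha, haS⟩
      _ ≤ g l := hmax a ha
      _ = f l := hfl.symm
      _ < f b := hlb
  · right
    calc f c ≤ g c := hge c ⟨hc, hcS⟩
      _ < g b := hcb
      _ ≤ f b := hle b ⟨hb, hbS⟩

theorem IsFishburnUtility.never_first_of_le_axis (hf : IsFishburnUtility ∅ (X \ S) f)
    (hg : IsAxis X g) (hm : m ∈ X \ S) (hmin : ∀ x ∈ X, g m ≤ g x) (hfm : f m = g m)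
    (hle : ∀ x ∈ X ∩ S, g x ≤ f x) (hge : ∀ x ∈ X \ S, f x ≤ g x)
    {a b c : α} (ha : a ∈ X) (hb : b ∈ X) (hc : c ∈ X) (hbac : b ∈ uIoo a c) (hbS : b ∉ S) :
    f b < f a ∨ f b < f c := by
  have hneg : IsFishburnUtility univ (X ∩ Sᶜ) (-f) := compl_empty ▸ hf.neg
  refine (hneg.never_last_of_le_axis hg.neg hm (fun x hx => neg_le_neg (hmin x hx))
    (congrArg Neg.neg hfm) (fun x hx => neg_le_neg (hge x hx)) (fun x hx => neg_le_neg (hle x ?_))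
    ha hb hc hbac hbS).imp neg_lt_neg_iff.1 neg_lt_neg_iff.1
  simpa using hx

theorem IsFishburnUtility.of_utilityOrder_eq (hp : IsFishburnUtility S X p)
    (hfp : utilityOrder X f = utilityOrder X p) : IsFishburnUtility S X f := by
  rwa [← utilityOrder_mem_genFishburn_iff, hfp, utilityOrder_mem_genFishburn_iff]

theorem isFishburnUtility_of_anchored (hg : IsAxis X g) (hl : l ∈ X ∩ S) (hm : m ∈ X \ S)
    (hmax : ∀ x ∈ X, g x ≤ g l) (hmin : ∀ x ∈ X, g m ≤ g x)
    (hfS : IsFishburnUtility univ (X ∩ S) f) (hfS' : IsFishburnUtility ∅ (X \ S) f)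
    (hfl : f l = g l) (hfm : f m = g m) (habove : ∀ x ∈ X ∩ S, f x = g x ∨ g l ≤ f x)
    (hbelow : ∀ x ∈ X \ S, f x = g x ∨ f x ≤ g m) :
    IsFishburnUtility S X f := by
  have hle : ∀ x ∈ X ∩ S, g x ≤ f x := fun x hx => (habove x hx).elim Eq.ge (hmax x hx.1).trans
  have hge : ∀ x ∈ X \ S, f x ≤ g x := fun x hx =>
    (hbelow x hx).elim Eq.le (le_trans · (hmin x hx.1))
  have axis_ne {x y : α} (hx : x ∈ X ∩ S) (hy : y ∈ X \ S) : g x ≠ g y :=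
    hg.injOn.ne hx.1 hy.1 (ne_of_mem_of_not_mem hx.2 hy.2)
  refine ⟨?_, fun a ha b hb c hc => hfS.never_last_of_le_axis hg hl hmax hfl hle hge ha hb hc,
    fun a ha b hb c hc => hfS'.never_first_of_le_axis hg hm hmin hfm hle hge ha hb hc⟩
  rw [← inter_union_sdiff X S, injOn_union disjoint_sdiff_inter.symm]
  refine ⟨hfS.injOn, hfS'.injOn, fun x hx y hy => ?_⟩
  have hyl : g y < g l := (hmax y hy.1).lt_of_ne (axis_ne hl hy).symm
  have hmx : g m < g x := (hmin x hx.1).lt_of_ne (axis_ne hx hm).symm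
  rcases habove x hx with hfx | hfx
  · rcases hbelow y hy with hfy | hfy
    · rw [hfx, hfy]
      exact axis_ne hx hy
    · exact (hfy.trans_lt (hmx.trans_le hfx.ge)).ne'
  · exact ((hge y hy).trans_lt (hyl.trans_le hfx)).ne'

theorem exists_isFishburnUtility_merge (hX : X.Finite) (hl : IsLeast X l) (hm : IsGreatest X m)
    (hlS : l ∈ S) (hmS : m ∉ S) (hp : IsFishburnUtility univ (X ∩ S) p)
    (hq : IsFishburnUtility ∅ (X \ S) q) :
    ∃ f, IsFishburnUtility S X f ∧ f m < f l ∧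
      utilityOrder (X ∩ S) f = utilityOrder (X ∩ S) p ∧
      utilityOrder (X \ S) f = utilityOrder (X \ S) q := by
  classical
  obtain ⟨g, hanti⟩ := exists_strictAntiOn hX
  have hg : IsAxis X g := Or.inr hanti
  have hmax : ∀ x ∈ X, g x ≤ g l := fun x hx => hanti.antitoneOn hl.1 hx (hl.2 hx)
  have hmin : ∀ x ∈ X, g m ≤ g x := fun x hx => hanti.antitoneOn hx hm.1 (hm.2 hx)
  have hlX : l ∈ X ∩ S := ⟨hl.1, hlS⟩
  have hmX : m ∈ X \ S := ⟨hm.1, hmS⟩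
  obtain ⟨u, hup, hul, hu⟩ := hp.exists_anchored_above (hg.mono inter_subset_left) hlX
    fun x hx => hmax x hx.1
  obtain ⟨v, hvq, hvm, hv⟩ := hq.exists_anchored_below (hg.mono sdiff_subset) hmX
    fun x hx => hmin x hx.1
  let f : α → ℚ := S.piecewise u v
  have hfu {x : α} (hx : x ∈ X ∩ S) : f x = u x := S.piecewise_eq_of_mem u v hx.2
  have hfv {x : α} (hx : x ∈ X \ S) : f x = v x := S.piecewise_eq_of_notMem u v hx.2
  have hfp : utilityOrder (X ∩ S) f = utilityOrder (X ∩ S) p :=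
    (utilityOrder_congr fun x hx y hy => by rw [hfu hx, hfu hy]).trans hup
  have hfq : utilityOrder (X \ S) f = utilityOrder (X \ S) q :=
    (utilityOrder_congr fun x hx y hy => by rw [hfv hx, hfv hy]).trans hvq
  refine ⟨f, isFishburnUtility_of_anchored hg hlX hmX hmax hmin (hp.of_utilityOrder_eq hfp)
    (hq.of_utilityOrder_eq hfq) ((hfu hlX).trans hul) ((hfv hmX).trans hvm)
    (fun x hx => hfu hx ▸ hu x hx) (fun x hx => hfv hx ▸ hv x hx), ?_, hfp, hfq⟩
  rw [hfu hlX, hfv hmX, hul, hvm]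
  exact hanti hl.1 hm.1 ((hl.2 hm.1).lt_of_ne (ne_of_mem_of_not_mem hlS hmS))

theorem genFishburn_univ_prod_genFishburn_empty_subset (hX : X.Finite) (hl : IsLeast X l)
    (hm : IsGreatest X m) (hlS : l ∈ S) (hmS : m ∉ S) :
    genFishburn univ (X ∩ S) ×ˢ genFishburn ∅ (X \ S) ⊆
      (fun r => (restrictRel (X ∩ S) r, restrictRel (X \ S) r)) ''
        {r ∈ genFishburn S X | r l m} := by
  rintro ⟨s, t⟩ ⟨hs, ht⟩
  obtain ⟨p, hp, rfl⟩ := exists_isFishburnUtility_of_mem_genFishburn (hX.inter_of_left S) hs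
  obtain ⟨q, hq, rfl⟩ := exists_isFishburnUtility_of_mem_genFishburn hX.sdiff ht
  obtain ⟨f, hf, hml, hfp, hfq⟩ := exists_isFishburnUtility_merge hX hl hm hlS hmS hp hq
  refine ⟨utilityOrder X f, ⟨utilityOrder_mem_genFishburn_iff.2 hf, hl.1, hm.1, hml⟩, ?_⟩
  rw [Prod.mk.injEq]
  exact ⟨(restrictRel_utilityOrder inter_subset_left).trans hfp,
    (restrictRel_utilityOrder sdiff_subset).trans hfq⟩

theorem finite_setOf_mem_genFishburn_and_rel (hX : X.Finite) :
    {r ∈ genFishburn S X | r l m}.Finite :=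
  (finite_genFishburn hX).subset (sep_subset _ _)

theorem two_pow_le_ncard_setOf_rel_of_mem_of_notMem {s : ℕ} (hX : X.ncard = s + 2)
    (hl : IsLeast X l) (hm : IsGreatest X m) (hlS : l ∈ S) (hmS : m ∉ S) :
    2 ^ s ≤ {r ∈ genFishburn S X | r l m}.ncard := by
  have hfin : X.Finite := finite_of_ncard_ne_zero (by omega)
  obtain ⟨i, hi⟩ := Nat.exists_eq_succ_of_ne_zero
    (ncard_pos (hfin.inter_of_left S) |>.2 ⟨l, hl.1, hlS⟩).ne'
  obtain ⟨j, hj⟩ := Nat.exists_eq_succ_of_ne_zero (ncard_pos (hfin.sdiff (t := S)) |>.2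
    ⟨m, hm.1, hmS⟩).ne'
  have hs : s = i + j := by
    have := ncard_inter_add_ncard_sdiff_eq_ncard X S hfin
    omega
  have hhalf := finite_setOf_mem_genFishburn_and_rel (S := S) (l := l) (m := m) hfin
  calc 2 ^ s = (genFishburn univ (X ∩ S) ×ˢ genFishburn ∅ (X \ S)).ncard := by
        rw [ncard_prod, ncard_genFishburn_univ hi, ncard_genFishburn_empty hj, ← pow_add, hs]
    _ ≤ _ := ncard_le_ncard
        (genFishburn_univ_prod_genFishburn_empty_subset hfin hl hm hlS hmS) (hhalf.image _)
    _ ≤ {r ∈ genFishburn S X | r l m}.ncard := ncard_image_le hhalf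

theorem two_pow_le_ncard_setOf_rel {s : ℕ} (hX : X.ncard = s + 2) (hl : IsLeast X l)
    (hm : IsGreatest X m) (hlm : l < m) : 2 ^ s ≤ {r ∈ genFishburn S X | r l m}.ncard := by
  -- The two ends of `X` are never in the middle, so they can be moved into and out of `S`.
  have hS : genFishburn S X = genFishburn (insert l (S \ {m})) X := by
    refine genFishburn_congr fun a ha b _ c hc hbac => ?_
    have hbl : b ≠ l := by rintro rfl; exact notMem_uIoo_of_isLeast hl a ha c hc hbac
    have hbm : b ≠ m := by rintro rfl; exact notMem_uIoo_of_isGreatest hm a ha c hc hbac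
    simp [hbl, hbm]
  rw [hS]
  exact two_pow_le_ncard_setOf_rel_of_mem_of_notMem hX hl hm (mem_insert _ _)
    (by simp [hlm.ne'])

theorem two_pow_le_ncard_genFishburn {s : ℕ} (hX : X.ncard = s + 1) :
    2 ^ s ≤ (genFishburn S X).ncard := by
  cases s with
  | zero => exact (ncard_genFishburn_of_ncard_eq_one hX).ge
  | succ s =>
    have hfin : X.Finite := finite_of_ncard_ne_zero (by omega)
    obtain ⟨l, m, hl, hm, hlm⟩ := exists_isLeast_isGreatest_lt (X := X) (by omega)
    have finite_half (T : Set α) : {r ∈ genFishburn T X | r l m}.Finite :=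
      finite_setOf_mem_genFishburn_and_rel hfin
    have hdisj : Disjoint {r ∈ genFishburn S X | r l m}
        (flip '' {r ∈ genFishburn Sᶜ X | r l m}) := by
      rw [disjoint_left]
      rintro _ hr ⟨r, hr', rfl⟩
      exact hr.1.1.asymm hr.2 hr'.2
    have hsub : {r ∈ genFishburn S X | r l m} ∪ flip '' {r ∈ genFishburn Sᶜ X | r l m} ⊆
        genFishburn S X := by
      refine union_subset (sep_subset _ _) (image_subset_iff.2 fun r hr => ?_)
      exact compl_compl S ▸ flip_mem_genFishburn_compl hr.1
    calc 2 ^ (s + 1) = 2 ^ s + 2 ^ s := by rw [pow_succ, mul_two]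
      _ ≤ {r ∈ genFishburn S X | r l m}.ncard + {r ∈ genFishburn Sᶜ X | r l m}.ncard :=
          add_le_add (two_pow_le_ncard_setOf_rel hX hl hm hlm)
            (two_pow_le_ncard_setOf_rel hX hl hm hlm)
      _ = ({r ∈ genFishburn S X | r l m} ∪ flip '' {r ∈ genFishburn Sᶜ X | r l m}).ncard := by
          rw [ncard_union_eq hdisj (finite_half S) ((finite_half Sᶜ).image _),
            ncard_image_of_injective _ flip_injective]
      _ ≤ (genFishburn S X).ncard := ncard_le_ncard hsub (finite_genFishburn hfin)

theorem isAbundant_genFishburn {s : ℕ} (hX : X.Finite) :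
    IsAbundant X (genFishburn S X) (s + 1) (2 ^ s) := fun A hAX hA => by
  rw [restrictDom_genFishburn hX hAX]
  exact two_pow_le_ncard_genFishburn hA

theorem isExactlyAbundant_genFishburn {s : ℕ} (hX : X.Finite) (hAX : A ⊆ X)
    (hA : A.ncard = s + 1)
    (hmono : (∀ a ∈ A, ∀ b ∈ A, ∀ c ∈ A, b ∈ uIoo a c → b ∈ S) ∨
      ∀ a ∈ A, ∀ b ∈ A, ∀ c ∈ A, b ∈ uIoo a c → b ∉ S) :
    IsExactlyAbundant X (genFishburn S X) (s + 1) (2 ^ s) := by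
  refine ⟨isAbundant_genFishburn hX, fun habundant => ?_⟩
  have hcard : (genFishburn S A).ncard = 2 ^ s := by
    rcases hmono with h | h
    · rw [genFishburn_congr (T := univ) fun a ha b hb c hc hbac =>
        iff_of_true (h a ha b hb c hc hbac) (mem_univ b), ncard_genFishburn_univ hA]
    · rw [genFishburn_congr (T := ∅) fun a ha b hb c hc hbac =>
        iff_of_false (h a ha b hb c hc hbac) (notMem_empty b), ncard_genFishburn_empty hA]
  have hle := habundant A hAX hA
  rw [restrictDom_genFishburn hX hAX, hcard] at hle
  omega

end GeneralizedFishburn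

/-! ### The alternating domain -/

section Alternating

theorem fishburnAlternating_eq_genFishburn (n : ℕ) :
    fishburnAlternating n = genFishburn {b | Even b} (Icc 1 n) := by
  ext r
  refine and_congr_right fun _ =>
    ⟨fun h a ha b hb c hc hbac => ?_, fun h a b c ha hb hc hab hbc => ?_⟩
  · rw [mem_ofPred_eq, Nat.not_even_iff_odd]
    rcases mem_uIoo_iff_lt_and_lt.1 hbac with ⟨hab, hbc⟩ | ⟨hcb, hba⟩
    · exact (h a b c ha hb hc hab hbc).symm
    · simpa only [and_comm] using h c b a hc hb ha hcb hba
  · simpa only [mem_ofPred_eq, Nat.not_even_iff_odd, and_comm] using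
      (h a ha b hb c hc (mem_uIoo_of_lt hab hbc)).symm

theorem exists_subset_Icc_forall_mem_uIoo_odd_add {n k : ℕ} (hk : k ≤ min n ((n + 1) / 2 + 1)) :
    ∃ A ⊆ Icc 1 n, A.ncard = k ∧
      ∀ a ∈ A, ∀ b ∈ A, ∀ c ∈ A, b ∈ uIoo a c → Odd (n + b) := by
  -- The first `k` terms of `n, n - 1, n - 3, n - 5, …`, with `1` for a last term `0`.
  let w : ℕ → ℕ := fun j => min n (max 1 (n + 1 - 2 * j))
  have odd_add_or {j : ℕ} : w j = n ∨ w j ≤ 1 ∨ Odd (n + w j) := by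
    rw [Nat.odd_iff]
    grind
  refine ⟨w '' Iio k, ?_, ?_, ?_⟩
  · rintro _ ⟨j, hj : j < k, rfl⟩
    rw [mem_Icc]
    grind
  · have hinj : InjOn w (Iio k) := fun i (hi : i < k) j (hj : j < k) hij => by grind
    rw [hinj.ncard_image, ncard_eq_toFinset_card', toFinset_Iio, Nat.card_Iio]
  · rintro _ ⟨i, -, rfl⟩ _ ⟨j, -, rfl⟩ _ ⟨i', -, rfl⟩ hmid
    rw [mem_uIoo_iff_lt_and_lt] at hmid
    grind

end Alternating

/-- For every `n ≥ 2` and every `k` with `1 ≤ k ≤ min n (⌈n/2⌉ + 1)`, Fishburn's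
alternating domain on `{1,…,n}` is exactly `(k, 2^(k-1))`-abundant. -/
theorem fishburn_exactly_abundant (n k : ℕ) (hn : 2 ≤ n)
    (hk1 : 1 ≤ k) (hk : k ≤ min n ((n + 1) / 2 + 1)) :
    IsExactlyAbundant (Set.Icc 1 n) (fishburnAlternating n) k (2 ^ (k - 1)) := by
  obtain ⟨s, rfl⟩ := Nat.exists_eq_add_of_le' hk1
  obtain ⟨A, hAX, hA, hodd⟩ := exists_subset_Icc_forall_mem_uIoo_odd_add hk
  rw [fishburnAlternating_eq_genFishburn, Nat.add_sub_cancel]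
  refine isExactlyAbundant_genFishburn (finite_Icc 1 n) hAX hA ?_
  have even_iff {a b c : ℕ} (ha : a ∈ A) (hb : b ∈ A) (hc : c ∈ A) (hbac : b ∈ uIoo a c) :
      Even b ↔ Odd n := (Nat.odd_add.1 (hodd a ha b hb c hc hbac)).symm
  by_cases hn_odd : Odd n
  · exact Or.inl fun a ha b hb c hc hbac => (even_iff ha hb hc hbac).2 hn_odd
  · exact Or.inr fun a ha b hb c hc hbac hb_even => hn_odd ((even_iff ha hb hc hbac).1 hb_even)
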